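/- arXiv:2506.02318 — 11 statements merged into one kernel-verified Lean document; each statement's English description precedes it below -/
import Mathlib

section
/- Let S ≥ 2 be an integer, let m : Fin S be a distinguished mask token, and let Q : Matrix (Fin S) (Fin S) ℝ be the absorbing rate matrix Q a b = (if b = m then 1 else 0) − (if a = b then 1 else 0) (i.e., Q = 𝟏 eₘᵀ − I). Then for every t : ℝ, Matrix.exp ℝ (t • Q) = (1 − Real.exp (−t)) • (𝟏 eₘᵀ) + Real.exp (−t) • I; equivalently, entrywise, (Matrix.exp ℝ (t • Q)) a b equals exp(−t) if a = b and a ≠ m, equals 1 − exp(−t) if a ≠ b and b = m, equals 1 if a = b = m, and equals 0 otherwise. -/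
/-- Exponential of a real multiple of an idempotent matrix. -/
theorem exp_smul_idem {S : ℕ} (P : Matrix (Fin S) (Fin S) ℝ) (hP : P * P = P) (s : ℝ) :
    NormedSpace.exp (s • P) = Real.exp s • P + (1 - P) := by
  rw [NormedSpace.exp_eq_tsum ℝ]
  have h1 : HasSum (fun n : ℕ => ((n.factorial : ℝ)⁻¹ * s ^ n) • P) (Real.exp s • P) := by
    have h := NormedSpace.exp_series_hasSum_exp' (𝕂 := ℝ) s
    rw [← Real.exp_eq_exp_ℝ] at h
    simpa only [smul_eq_mul] using h.smul_const P
  have h2 : HasSum (fun n : ℕ => if n = 0 then 1 - P else 0) (1 - P) := hasSum_ite_eq 0 (1 - P)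
  have h3 := h1.add h2
  refine Eq.trans ?_ h3.tsum_eq
  refine tsum_congr fun n => ?_
  rcases n with _ | n
  · simp
  · have hp : P ^ (n + 1) = P := by
      induction n with
      | zero => simp
      | succ k ih => rw [pow_succ, ih, hP]
    simp [smul_pow, hp, smul_smul]

/-- The absorbing rate matrix exponential: `exp(tQ) = (1 - e^{-t}) 𝟏 eₘᵀ + e^{-t} I`
for `Q = 𝟏 eₘᵀ - I`. -/
theorem absorbing_matrix_exp (S : ℕ) (hS : 2 ≤ S) (m : Fin S)
    (Q : Matrix (Fin S) (Fin S) ℝ)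
    (hQ : ∀ a b : Fin S, Q a b = (if b = m then (1 : ℝ) else 0) - (if a = b then 1 else 0)) :
    ∀ t : ℝ,
      NormedSpace.exp (t • Q)
          = (1 - Real.exp (-t)) • (Matrix.of fun _ b : Fin S => if b = m then (1 : ℝ) else 0)
            + Real.exp (-t) • (1 : Matrix (Fin S) (Fin S) ℝ) ∧
      ∀ a b : Fin S,
        NormedSpace.exp (t • Q) a b
          = if a = b then (if a = m then 1 else Real.exp (-t))
            else (if b = m then 1 - Real.exp (-t) else 0) := by
  intro t
  have hE : NormedSpace.exp (t • Q)
      = (1 - Real.exp (-t)) • (Matrix.of fun _ b : Fin S => if b = m then (1 : ℝ) else 0)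
        + Real.exp (-t) • (1 : Matrix (Fin S) (Fin S) ℝ) := by
    set E : Matrix (Fin S) (Fin S) ℝ := Matrix.of fun _ b : Fin S => if b = m then (1 : ℝ) else 0
      with hEdef
    have hEE : E * E = E := by
      ext a b
      simp [hEdef, Matrix.mul_apply]
    have hQE : Q = E - 1 := by
      ext a b
      simp [hEdef, hQ, Matrix.one_apply]
    have hP : (1 - E) * (1 - E) = 1 - E := by
      simp [mul_sub, sub_mul, hEE]
    have h := exp_smul_idem (1 - E) hP (-t)
    have h' : t • Q = (-t) • (1 - E) := by
      rw [hQE]; module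
    rw [h', h]
    module
  refine ⟨hE, fun a b => ?_⟩
  rw [hE]
  by_cases hab : a = b
  · subst hab
    by_cases ham : a = m <;> simp [ham]
  · by_cases hbm : b = m <;> simp [hab, hbm, Matrix.one_apply]
    have ham : a ≠ m := fun h => hab (h.trans hbm.symm)
    simp [ham]
end

section
/- Define the d-dimensional absorbing rate matrix Q : Matrix X X ℝ by: Q x y = 1 if x and y differ in exactly one coordinate j with x j ≠ m and y j = m; Q x x = −(d − m̄(x)); and Q x y = 0 in all other cases. Then for every t : ℝ and all x0, x ∈ X, the (x0, x) entry of the matrix exponential satisfies (Matrix.exp ℝ (t • Q)) x0 x = ∏_{i : Fin d} P_t (x0 i) (x i). -/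
open Finset

/-- Per-token absorbing transition kernel. -/
noncomputable def absK (S : ℕ) (m : Fin S) (t : ℝ) (a b : Fin S) : ℝ :=
  if a = b then (if a = m then 1 else Real.exp (-t))
  else (if b = m then 1 - Real.exp (-t) else 0)

/-- Forward marginal at time `t` of the absorbing diffusion started at `q0`. -/
noncomputable def fwd (S d : ℕ) (m : Fin S) (q0 : (Fin d → Fin S) → ℝ) (t : ℝ)
    (x : Fin d → Fin S) : ℝ :=
  ∑ x0 : Fin d → Fin S, q0 x0 * ∏ i : Fin d, absK S m t (x0 i) (x i)

/-- Number of masked coordinates. -/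
def nmask (S d : ℕ) (m : Fin S) (x : Fin d → Fin S) : ℕ :=
  (Finset.univ.filter (fun i => x i = m)).card

lemma absK_hasDerivAt (S : ℕ) (m : Fin S) (a b : Fin S) (t : ℝ) :
    HasDerivAt (fun t => absK S m t a b)
      (if a = m then 0 else absK S m t m b - absK S m t a b) t := by
  have he : HasDerivAt (fun t : ℝ => Real.exp (-t)) (-Real.exp (-t)) t := by
    simpa using (hasDerivAt_neg t).exp
  have he' : HasDerivAt (fun t : ℝ => 1 - Real.exp (-t)) (Real.exp (-t)) t := by
    simpa using he.const_sub 1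
  unfold absK
  by_cases ha : a = m
  · subst ha
    by_cases hb : a = b
    · subst hb; simpa using hasDerivAt_const t (1 : ℝ)
    · have : ¬ b = a := fun h => hb h.symm
      simpa [hb, this] using hasDerivAt_const t (0 : ℝ)
  · by_cases hb : a = b
    · subst hb
      have : ¬ m = a := fun h => ha h.symm
      simpa [ha, this] using he
    · by_cases hm : b = m
      · subst hm; simpa [hb] using he'
      · have : ¬ m = b := fun h => hm h.symm
        simpa [hb, hm, ha, this] using hasDerivAt_const t (0 : ℝ)

lemma Q_eq (S d : ℕ) (m : Fin S)
    (Q : Matrix (Fin d → Fin S) (Fin d → Fin S) ℝ)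
    (hQdiag : ∀ x : Fin d → Fin S, Q x x = -((d : ℝ) - (nmask S d m x : ℝ)))
    (hQone : ∀ (x y : Fin d → Fin S) (j : Fin d),
      x j ≠ m → y j = m → (∀ i : Fin d, i ≠ j → x i = y i) → Q x y = 1)
    (hQzero : ∀ x y : Fin d → Fin S, x ≠ y →
      (¬ ∃ j : Fin d, x j ≠ m ∧ y j = m ∧ ∀ i : Fin d, i ≠ j → x i = y i) → Q x y = 0)
    (x y : Fin d → Fin S) :
    Q x y = ∑ j : Fin d, if x j = m then 0 else
      ((if y = Function.update x j m then (1 : ℝ) else 0) - (if y = x then 1 else 0)) := by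
  by_cases hxy : y = x
  · subst hxy
    rw [hQdiag]
    have h1 : ∀ j : Fin d, (if y j = m then (0 : ℝ) else
      ((if y = Function.update y j m then (1 : ℝ) else 0) - (if y = y then 1 else 0)))
        = (if y j = m then 1 else 0) - 1 := by
      intro j
      by_cases h : y j = m
      · simp [h]
      · have : y ≠ Function.update y j m := by
          intro h'
          apply h
          have := congrFun h' j
          simpa using this
        simp [h, this]
    rw [Finset.sum_congr rfl (fun j _ => h1 j), Finset.sum_sub_distrib, Finset.sum_boole]
    simp [nmask]
  · by_cases hj : ∃ j : Fin d, x j ≠ m ∧ y j = m ∧ ∀ i : Fin d, i ≠ j → x i = y i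
    · obtain ⟨j, h1, h2, h3⟩ := hj
      rw [hQone x y j h1 h2 h3, Finset.sum_eq_single j]
      · have : y = Function.update x j m := by
          funext i
          by_cases hi : i = j
          · subst hi; simp [h2]
          · simp [hi, h3 i hi]
        rw [if_neg h1, if_pos this, if_neg hxy]; simp
      · intro k _ hk
        by_cases hk' : x k = m
        · simp [hk']
        · have : y ≠ Function.update x k m := by
            intro h
            apply h1
            have h4 := congrFun h j
            rw [Function.update_of_ne hk.symm] at h4
            rw [← h4, h2]
          simp [this, hxy]
      · simp
    · rw [hQzero x y (Ne.symm hxy) hj]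
      symm
      apply Finset.sum_eq_zero
      intro j _
      by_cases hk' : x j = m
      · simp [hk']
      · have : y ≠ Function.update x j m := by
          intro h
          apply hj
          refine ⟨j, hk', by simp [h], ?_⟩
          intro i hi
          simp [h, hi]
        simp [this, hxy]

/-- The tensor kernel as a matrix. -/
noncomputable def tensK (S d : ℕ) (m : Fin S) (t : ℝ) :
    Matrix (Fin d → Fin S) (Fin d → Fin S) ℝ :=
  Matrix.of fun x0 x => ∏ i : Fin d, absK S m t (x0 i) (x i)

lemma tensK_zero (S d : ℕ) (m : Fin S) : tensK S d m 0 = 1 := by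
  ext x y
  simp only [tensK, Matrix.of_apply, Matrix.one_apply]
  have h : ∀ a b : Fin S, absK S m 0 a b = if a = b then 1 else 0 := by
    intro a b
    simp [absK]
  simp only [h]
  by_cases hxy : x = y
  · simp [hxy]
  · rw [if_neg hxy]
    obtain ⟨i, hi⟩ := Function.ne_iff.mp hxy
    exact Finset.prod_eq_zero (Finset.mem_univ i) (by simp [hi])

lemma tensK_entry (S d : ℕ) (m : Fin S)
    (Q : Matrix (Fin d → Fin S) (Fin d → Fin S) ℝ)
    (hQ : ∀ x y, Q x y = ∑ j : Fin d, if x j = m then 0 else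
      ((if y = Function.update x j m then (1 : ℝ) else 0) - (if y = x then 1 else 0)))
    (t : ℝ) (x0 x : Fin d → Fin S) :
    HasDerivAt (fun t => tensK S d m t x0 x) ((Q * tensK S d m t) x0 x) t := by
  have h := HasDerivAt.fun_finsetProd (u := Finset.univ)
    (fun i _ => absK_hasDerivAt S m (x0 i) (x i) t)
  refine h.congr_deriv ?_
  rw [Matrix.mul_apply]
  simp only [hQ, Finset.sum_mul]
  rw [Finset.sum_comm]
  refine Finset.sum_congr rfl fun j _ => ?_
  by_cases hj : x0 j = m
  · simp [hj]
  · simp only [if_neg hj, sub_mul, ite_mul, one_mul, zero_mul, Finset.sum_sub_distrib,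
      Finset.sum_ite_eq', Finset.sum_ite_eq, Finset.mem_univ, if_true, tensK, Matrix.of_apply]
    rw [← Finset.mul_prod_erase _ _ (Finset.mem_univ j),
      ← Finset.mul_prod_erase (a := j) _ (fun i => absK S m t (x0 i) (x i)) (Finset.mem_univ j)]
    have : ∏ i ∈ Finset.univ.erase j, absK S m t (Function.update x0 j m i) (x i)
        = ∏ i ∈ Finset.univ.erase j, absK S m t (x0 i) (x i) := by
      refine Finset.prod_congr rfl fun i hi => ?_
      rw [Function.update_of_ne (Finset.ne_of_mem_erase hi)]
    rw [this]
    simp only [Function.update_self, smul_eq_mul]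
    ring

section
attribute [local instance] Matrix.linftyOpNormedRing Matrix.linftyOpNormedAlgebra

lemma exp_eq_of_ode {n : Type*} [Fintype n] [DecidableEq n] (Q : Matrix n n ℝ)
    (K : ℝ → Matrix n n ℝ) (h0 : K 0 = 1)
    (hK : ∀ t i j, HasDerivAt (fun t => K t i j) ((Q * K t) i j) t) (t : ℝ) :
    NormedSpace.exp (t • Q) = K t := by
  have hK' : ∀ t, HasDerivAt K (Q * K t) t := fun t =>
    hasDerivAt_pi.2 fun i => hasDerivAt_pi.2 fun j => hK t i j
  have hE : ∀ t : ℝ, HasDerivAt (fun t : ℝ => NormedSpace.exp (t • (-Q)))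
      (NormedSpace.exp (t • (-Q)) * (-Q)) t := fun t => hasDerivAt_exp_smul_const (-Q) t
  have hF : ∀ t : ℝ, HasDerivAt (fun t : ℝ => NormedSpace.exp (t • (-Q)) * K t) 0 t := by
    intro t
    refine ((hE t).mul (hK' t)).congr_deriv ?_
    noncomm_ring
  have hc : NormedSpace.exp (t • (-Q)) * K t = 1 := by
    have := is_const_of_deriv_eq_zero (fun s => (hF s).differentiableAt)
      (fun s => (hF s).deriv) t 0
    simpa [h0] using this
  have hi : NormedSpace.exp (t • Q) * NormedSpace.exp (t • (-Q)) = 1 := by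
    rw [← Matrix.exp_add_of_commute]
    · simp
    · rw [smul_neg]; exact (Commute.refl _).neg_right
  calc NormedSpace.exp (t • Q)
      = NormedSpace.exp (t • Q) * (NormedSpace.exp (t • (-Q)) * K t) := by rw [hc, mul_one]
    _ = K t := by rw [← mul_assoc, hi, one_mul]

end

/-- The `d`-dimensional absorbing rate matrix has matrix exponential given by the
product of the per-token absorbing kernels. -/
theorem absorbing_matrix_exp_tensor (S d : ℕ) (hS : 2 ≤ S) (hd : 1 ≤ d) (m : Fin S)
    (Q : Matrix (Fin d → Fin S) (Fin d → Fin S) ℝ)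
    (hQdiag : ∀ x : Fin d → Fin S, Q x x = -((d : ℝ) - (nmask S d m x : ℝ)))
    (hQone : ∀ (x y : Fin d → Fin S) (j : Fin d),
      x j ≠ m → y j = m → (∀ i : Fin d, i ≠ j → x i = y i) → Q x y = 1)
    (hQzero : ∀ x y : Fin d → Fin S, x ≠ y →
      (¬ ∃ j : Fin d, x j ≠ m ∧ y j = m ∧ ∀ i : Fin d, i ≠ j → x i = y i) → Q x y = 0) :
    ∀ (t : ℝ) (x0 x : Fin d → Fin S),
      NormedSpace.exp (t • Q) x0 x = ∏ i : Fin d, absK S m t (x0 i) (x i) := by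
  intro t x0 x
  rw [exp_eq_of_ode Q (tensK S d m) (tensK_zero S d m)
    (fun t i j => tensK_entry S d m Q (Q_eq S d m Q hQdiag hQone hQzero) t i j) t]
  rfl
end

section
/- For every y ∈ X and every t : ℝ, the function u ↦ q_u y has derivative at t equal to (∑_{j : Fin d, y j = m} ∑_{a : Fin S, a ≠ m} q_t (y[j ↦ a])) − (d − m̄(y)) · q_t y. That is, the forward marginals of the absorbing diffusion satisfy the Kolmogorov forward equation d/dt q_t(y) = ∑_{x} Q(x, y) q_t(x), where the only states x ≠ y with Q(x, y) > 0 are those obtained from y by replacing one masked coordinate by a non-mask token (with rate 1), and Q(y, y) = −(d − m̄(y)). -/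
open Finset

theorem absK_deriv (S : ℕ) (m : Fin S) (t : ℝ) (a b : Fin S) :
    HasDerivAt (fun u : ℝ => absK S m u a b)
      (if b = m then ∑ c ∈ Finset.univ.filter (fun c : Fin S => c ≠ m), absK S m t a c
        else - absK S m t a b) t := by
  have he : HasDerivAt (fun u : ℝ => Real.exp (-u)) (-Real.exp (-t)) t := by
    simpa using (hasDerivAt_neg t).exp
  have hsum : ∑ c ∈ Finset.univ.filter (fun c : Fin S => c ≠ m), absK S m t a c
      = if a = m then 0 else Real.exp (-t) := by
    have h1 : ∀ c ∈ Finset.univ.filter (fun c : Fin S => c ≠ m),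
        absK S m t a c = if a = c then (if a = m then 0 else Real.exp (-t)) else 0 := by
      intro c hc
      have hc' : c ≠ m := by simpa using hc
      unfold absK
      by_cases h : a = c
      · subst h; simp [hc']
      · simp [h, hc']
    rw [Finset.sum_congr rfl h1, Finset.sum_ite_eq]
    by_cases h : a = m <;> simp [h]
  rw [hsum]
  by_cases hb : b = m
  · by_cases ha : a = m
    · subst ha; subst hb; simpa [absK] using hasDerivAt_const t (1 : ℝ)
    · have hab : a ≠ b := by rw [hb]; exact ha
      simpa [absK, ha, hb] using he.const_sub 1
  · by_cases hab : a = b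
    · subst hab; simpa [absK, hb] using he
    · simpa [absK, hb, hab] using hasDerivAt_const t (0 : ℝ)

theorem prod_split (S d : ℕ) (m : Fin S) (t : ℝ) (x y : Fin d → Fin S) :
    ∑ i : Fin d, (∏ j ∈ Finset.univ.erase i, absK S m t (x j) (y j)) •
      (if y i = m then ∑ c ∈ Finset.univ.filter (fun c : Fin S => c ≠ m), absK S m t (x i) c
        else - absK S m t (x i) (y i))
    = (∑ j ∈ Finset.univ.filter (fun j : Fin d => y j = m),
        ∑ a ∈ Finset.univ.filter (fun a : Fin S => a ≠ m),
          ∏ i : Fin d, absK S m t (x i) (Function.update y j a i))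
      - ((d : ℝ) - (nmask S d m y : ℝ)) * ∏ i : Fin d, absK S m t (x i) (y i) := by
  have hcard : (d : ℝ) - (nmask S d m y : ℝ)
      = ∑ i ∈ Finset.univ.filter (fun i : Fin d => ¬ y i = m), (1 : ℝ) := by
    have := Finset.card_filter_add_card_filter_not (s := (Finset.univ : Finset (Fin d)))
      (fun i => y i = m)
    rw [Finset.card_univ, Fintype.card_fin] at this
    rw [Finset.sum_const, nsmul_eq_mul, mul_one, nmask, sub_eq_iff_eq_add']
    exact_mod_cast this.symm
  rw [hcard, Finset.sum_mul, ← Finset.sum_filter_add_sum_filter_not Finset.univ (fun i => y i = m),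
    sub_eq_add_neg, ← Finset.sum_neg_distrib]
  congr 1
  · refine Finset.sum_congr rfl fun j hj => ?_
    have hj' : y j = m := by simpa using hj
    rw [if_pos hj', smul_eq_mul, Finset.mul_sum]
    refine Finset.sum_congr rfl fun a _ => ?_
    rw [← Finset.prod_erase_mul _ _ (Finset.mem_univ j), Function.update_self]
    congr 1
    refine Finset.prod_congr rfl fun i hi => ?_
    rw [Function.update_of_ne (Finset.ne_of_mem_erase hi)]
  · refine Finset.sum_congr rfl fun j hj => ?_
    have hj' : ¬ y j = m := by simpa using hj
    rw [if_neg hj', smul_eq_mul, ← Finset.prod_erase_mul _ _ (Finset.mem_univ j)]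
    ring

/-- Kolmogorov forward equation for the absorbing-rate forward marginals. -/
theorem absorbing_kolmogorov_forward (S d : ℕ) (hS : 2 ≤ S) (hd : 1 ≤ d) (m : Fin S)
    (q0 : (Fin d → Fin S) → ℝ) (hq0 : ∀ x, 0 ≤ q0 x)
    (hq0sum : ∑ x : Fin d → Fin S, q0 x = 1) :
    ∀ (y : Fin d → Fin S) (t : ℝ),
      HasDerivAt (fun u : ℝ => fwd S d m q0 u y)
        ((∑ j ∈ Finset.univ.filter (fun j : Fin d => y j = m),
            ∑ a ∈ Finset.univ.filter (fun a : Fin S => a ≠ m),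
              fwd S d m q0 t (Function.update y j a))
          - ((d : ℝ) - (nmask S d m y : ℝ)) * fwd S d m q0 t y) t := by
  intro y t
  have h := HasDerivAt.fun_sum (u := (Finset.univ : Finset (Fin d → Fin S))) fun x _ =>
    (HasDerivAt.fun_finsetProd (u := (Finset.univ : Finset (Fin d))) fun i _ =>
      absK_deriv S m t (x i) (y i)).const_mul (q0 x)
  unfold fwd
  refine h.congr_deriv ?_
  simp_rw [prod_split, mul_sub, Finset.sum_sub_distrib, Finset.mul_sum]
  congr 1
  · rw [Finset.sum_comm]
    exact Finset.sum_congr rfl fun j _ => Finset.sum_comm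
  · exact Finset.sum_congr rfl fun x _ => by ring
end

section
/- There exists a constant C > 0 depending only on S such that for every d ≥ 1, every probability mass function q0 on X, and every T ≥ 1, the Kullback–Leibler divergence between the forward marginal at time T and the surrogate initialization distribution with parameter ε = exp(−T) satisfies ∑_{x ∈ X, q_T x > 0} q_T x · Real.log (q_T x / p_init x) ≤ C · d · exp(−T), where p_init x = ∏_{i : Fin d} ((1 − exp(−T)) if x i = m, and exp(−T)/(S − 1) if x i ≠ m). (Note p_init x > 0 for every x, so the sum is well defined.) -/
open Finset

/-- Surrogate initialization (product) distribution with parameter `ε`. -/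
noncomputable def pinit (S d : ℕ) (m : Fin S) (ε : ℝ) (x : Fin d → Fin S) : ℝ :=
  ∏ i : Fin d, (if x i = m then 1 - ε else ε / ((S : ℝ) - 1))

noncomputable def gAux (S : ℕ) (m : Fin S) (ε : ℝ) (b : Fin S) : ℝ :=
  if b = m then 2 * ε else (S : ℝ)

lemma absK_nonneg_aux (S : ℕ) (m : Fin S) (t : ℝ) (ht : 0 ≤ t) (a b : Fin S) :
    0 ≤ absK S m t a b := by
  have h1 : Real.exp (-t) ≤ 1 := Real.exp_le_one_iff.2 (by linarith)
  have h2 := Real.exp_pos (-t)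
  unfold absK
  split_ifs <;> linarith

lemma absK_sum_aux (S : ℕ) (m : Fin S) (t : ℝ) (a : Fin S) (f : Fin S → ℝ) :
    ∑ b, absK S m t a b * f b =
      if a = m then f m else Real.exp (-t) * f a + (1 - Real.exp (-t)) * f m := by
  by_cases h : a = m
  · subst h
    rw [Finset.sum_eq_single a]
    · simp [absK]
    · intro b _ hb
      simp [absK, hb, Ne.symm hb]
    · simp
  · rw [if_neg h, Finset.sum_eq_add a m h]
    · simp [absK, h]
    · rintro c _ ⟨hc1, hc2⟩
      simp [absK, hc2, Ne.symm hc1]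
    · simp
    · simp

lemma absK_le_aux (S : ℕ) (hS : 2 ≤ S) (m : Fin S) (t : ℝ) (ht : Real.exp (-t) ≤ 1/2)
    (a b : Fin S) :
    absK S m t a b ≤ (if b = m then 1 - Real.exp (-t) else Real.exp (-t) / ((S : ℝ) - 1)) *
      Real.exp (gAux S m (Real.exp (-t)) b) := by
  have hS' : (2 : ℝ) ≤ S := by exact_mod_cast hS
  have h2 := Real.exp_pos (-t)
  unfold gAux
  set ε := Real.exp (-t) with hε
  by_cases hb : b = m
  · rw [if_pos hb, if_pos hb]
    have h1 : absK S m t a b ≤ 1 := by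
      unfold absK
      split_ifs <;> linarith
    have h3 := Real.add_one_le_exp (2 * ε)
    nlinarith
  · rw [if_neg hb, if_neg hb]
    have h1 : absK S m t a b ≤ ε := by
      unfold absK
      split_ifs with h h'
      · exact absurd (h.symm.trans h') hb
      · exact le_refl _
      · exact h2.le
    have h3 := Real.add_one_le_exp (S : ℝ)
    refine h1.trans ?_
    rw [div_mul_eq_mul_div, le_div_iff₀ (by linarith)]
    exact mul_le_mul_of_nonneg_left (by linarith) h2.le

lemma expect_aux (S d : ℕ) (m : Fin S) (t : ℝ) (x0 : Fin d → Fin S) (f : Fin S → ℝ) (i : Fin d) :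
    ∑ x : Fin d → Fin S, (∏ j, absK S m t (x0 j) (x j)) * f (x i) =
      ∑ b, absK S m t (x0 i) b * f b := by
  have h : ∀ x : Fin d → Fin S, (∏ j, absK S m t (x0 j) (x j)) * f (x i) =
      ∏ j, (absK S m t (x0 j) (x j) * (if j = i then f (x j) else 1)) := by
    intro x
    rw [Finset.prod_mul_distrib, Finset.prod_ite_eq' Finset.univ i (fun j => f (x j))]
    simp
  simp_rw [h]
  rw [← Fintype.prod_sum (fun j b => absK S m t (x0 j) b * (if j = i then f b else 1))]
  rw [Finset.prod_eq_single i]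
  · simp
  · intro j _ hj
    have := absK_sum_aux S m t (x0 j) (fun _ => 1)
    simp only [if_neg hj]
    rw [this]
    split_ifs <;> ring
  · simp

/-- KL divergence between the forward marginal at time `T` and the surrogate
initialization distribution with `ε = exp (-T)` is `O(d · exp (-T))`. -/
theorem absorbing_forward_KL_bound (S : ℕ) (hS : 2 ≤ S) (m : Fin S) :
    ∃ C : ℝ, 0 < C ∧
      ∀ d : ℕ, 1 ≤ d →
        ∀ q0 : (Fin d → Fin S) → ℝ, (∀ x, 0 ≤ q0 x) →
          (∑ x : Fin d → Fin S, q0 x = 1) →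
          ∀ T : ℝ, 1 ≤ T →
            ∑ x ∈ Finset.univ.filter (fun x : Fin d → Fin S => 0 < fwd S d m q0 T x),
                fwd S d m q0 T x *
                  Real.log (fwd S d m q0 T x / pinit S d m (Real.exp (-T)) x)
              ≤ C * d * Real.exp (-T) := by
  have hS' : (2 : ℝ) ≤ S := by exact_mod_cast hS
  refine ⟨S + 2, by linarith, ?_⟩
  intro d _ q0 hq0 hq1 T hT
  have hε2 : Real.exp (-T) ≤ 1/2 := by
    rw [Real.exp_neg, one_div]
    exact inv_anti₀ (by norm_num) (by linarith [Real.add_one_le_exp T])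
  have hε := Real.exp_pos (-T)
  have hle : ∀ x, fwd S d m q0 T x ≤ pinit S d m (Real.exp (-T)) x *
      Real.exp (∑ i, gAux S m (Real.exp (-T)) (x i)) := by
    intro x
    unfold fwd pinit
    rw [Real.exp_sum, ← Finset.prod_mul_distrib]
    calc _ ≤ ∑ x0 : Fin d → Fin S, q0 x0 * _ := Finset.sum_le_sum (fun x0 _ =>
          mul_le_mul_of_nonneg_left (Finset.prod_le_prod
            (fun i _ => absK_nonneg_aux S m T (by linarith) _ _)
            (fun i _ => absK_le_aux S hS m T hε2 (x0 i) (x i))) (hq0 x0))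
      _ = _ := by rw [← Finset.sum_mul, hq1, one_mul]
  have hp : ∀ x, 0 < pinit S d m (Real.exp (-T)) x := by
    intro x
    refine Finset.prod_pos (fun i _ => ?_)
    split_ifs
    · linarith
    · exact div_pos hε (by linarith)
  have hq : ∀ x, 0 ≤ fwd S d m q0 T x := fun x => Finset.sum_nonneg (fun x0 _ =>
    mul_nonneg (hq0 x0) (Finset.prod_nonneg
      (fun i _ => absK_nonneg_aux S m T (by linarith) _ _)))
  have hg : ∀ b, 0 ≤ gAux S m (Real.exp (-T)) b := by
    intro b
    unfold gAux
    split_ifs <;> linarith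
  calc _ ≤ ∑ x ∈ Finset.univ.filter (fun x : Fin d → Fin S => 0 < fwd S d m q0 T x),
        fwd S d m q0 T x * ∑ i, gAux S m (Real.exp (-T)) (x i) := by
        refine Finset.sum_le_sum (fun x hx => ?_)
        have hx' := (Finset.mem_filter.1 hx).2
        refine mul_le_mul_of_nonneg_left ?_ (hq x)
        rw [Real.log_le_iff_le_exp (div_pos hx' (hp x)), div_le_iff₀' (hp x)]
        exact hle x
    _ ≤ ∑ x, fwd S d m q0 T x * ∑ i, gAux S m (Real.exp (-T)) (x i) :=
        Finset.sum_le_sum_of_subset_of_nonneg (Finset.filter_subset _ _)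
          (fun x _ _ => mul_nonneg (hq x) (Finset.sum_nonneg (fun i _ => hg _)))
    _ = ∑ x0, q0 x0 * ∑ i, ∑ x : Fin d → Fin S,
          (∏ j, absK S m T (x0 j) (x j)) * gAux S m (Real.exp (-T)) (x i) := by
        unfold fwd
        simp_rw [Finset.sum_mul]
        rw [Finset.sum_comm]
        refine Finset.sum_congr rfl (fun x0 _ => ?_)
        rw [Finset.sum_comm (s := (Finset.univ : Finset (Fin d))), Finset.mul_sum]
        refine Finset.sum_congr rfl (fun x _ => ?_)
        rw [← Finset.mul_sum, mul_assoc]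
    _ ≤ ∑ x0, q0 x0 * ∑ i : Fin d, ((S + 2 : ℝ) * Real.exp (-T)) := by
        refine Finset.sum_le_sum (fun x0 _ => mul_le_mul_of_nonneg_left
          (Finset.sum_le_sum (fun i _ => ?_)) (hq0 x0))
        rw [expect_aux, absK_sum_aux]
        unfold gAux
        split_ifs <;> first | contradiction | nlinarith
    _ = _ := by
        rw [← Finset.sum_mul, hq1]
        simp
        ring
end

section
/- For every t ≥ 0, the negative entropy of the forward marginal satisfies the Jensen-type bound ∑_{x ∈ X, q_t x > 0} q_t x · Real.log (q_t x) ≤ (∑_{i : Fin d} (1 − q̄_i)) · (−t · exp(−t) + (1 − exp(−t)) · Real.log (1 − exp(−t))), where q̄_i := ∑_{x0 ∈ X, x0 i = m} q0 x0 is the probability under q0 that coordinate i is masked, and by convention (1 − exp(−t)) · log(1 − exp(−t)) = 0 when t = 0. -/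
open Finset

theorem aux_prod_entropy (S d : ℕ) (p : Fin d → Fin S → ℝ) (hp : ∀ i, ∑ b, p i b = 1) :
    ∑ x : Fin d → Fin S, (∏ i, p i (x i)) * Real.log (∏ i, p i (x i))
      = ∑ i, ∑ b, p i b * Real.log (p i b) := by
  have h1 : ∀ x : Fin d → Fin S, (∏ i, p i (x i)) * Real.log (∏ i, p i (x i))
      = ∑ i, ∏ j, (p j (x j) * if j = i then Real.log (p j (x j)) else 1) := by
    intro x
    simp_rw [Finset.prod_mul_distrib]
    rw [← Finset.mul_sum]
    by_cases h : ∏ i, p i (x i) = 0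
    · simp [h]
    · congr 1
      rw [Real.log_prod (fun i _ => Finset.prod_ne_zero_iff.mp h i (Finset.mem_univ i))]
      apply Finset.sum_congr rfl
      intro i _
      simp
  simp_rw [h1]
  rw [Finset.sum_comm]
  apply Finset.sum_congr rfl
  intro i _
  have h2 := Finset.prod_univ_sum (fun _ : Fin d => (Finset.univ : Finset (Fin S)))
    (fun j b => p j b * if j = i then Real.log (p j b) else 1)
  rw [Fintype.piFinset_univ] at h2
  rw [← h2, Finset.prod_eq_single i]
  · simp
  · intro j _ hj
    simp [hj, hp]
  · simp

theorem aux_row_sum (S : ℕ) (m : Fin S) (t : ℝ) (a : Fin S) (f : ℝ → ℝ) (hf : f 0 = 0) :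
    ∑ b, f (absK S m t a b) = if a = m then f 1 else f (Real.exp (-t)) + f (1 - Real.exp (-t)) := by
  split_ifs with h
  · rw [Finset.sum_eq_single m]
    · simp [absK, h]
    · intro b _ hb
      simp [absK, h, hb, hb.symm, hf]
    · simp
  · rw [← Finset.sum_subset (Finset.subset_univ {a, m}), Finset.sum_pair h]
    · simp [absK, h]
    · intro b _ hb
      simp only [Finset.mem_insert, Finset.mem_singleton, not_or] at hb
      simp [absK, hb.2, Ne.symm hb.1, hf]

/-- Jensen-type bound on the negative entropy of the forward marginal. -/
theorem absorbing_neg_entropy_bound (S d : ℕ) (hS : 2 ≤ S) (hd : 1 ≤ d) (m : Fin S)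
    (q0 : (Fin d → Fin S) → ℝ) (hq0 : ∀ x, 0 ≤ q0 x)
    (hq0sum : ∑ x : Fin d → Fin S, q0 x = 1) :
    ∀ t : ℝ, 0 ≤ t →
      ∑ x ∈ Finset.univ.filter (fun x : Fin d → Fin S => 0 < fwd S d m q0 t x),
          fwd S d m q0 t x * Real.log (fwd S d m q0 t x)
        ≤ (∑ i : Fin d,
              (1 - ∑ x0 ∈ Finset.univ.filter (fun x0 : Fin d → Fin S => x0 i = m), q0 x0))
            * (-t * Real.exp (-t)
                + (1 - Real.exp (-t)) * Real.log (1 - Real.exp (-t))) := by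
  intro t ht
  have hK : ∀ a b, 0 ≤ absK S m t a b := by
    intro a b
    have := Real.exp_le_one_iff.mpr (neg_nonpos.mpr ht)
    unfold absK
    split_ifs <;> first | positivity | linarith
  have hfn : ∀ x, 0 ≤ fwd S d m q0 t x := fun x =>
    Finset.sum_nonneg fun x0 _ => mul_nonneg (hq0 x0) (Finset.prod_nonneg fun i _ => hK _ _)
  have hrow : ∀ a, ∑ b, absK S m t a b = 1 := by
    intro a
    have := aux_row_sum S m t a id rfl
    simp only [id] at this
    rw [this]
    split_ifs <;> ring
  have hent : ∀ a, ∑ b, absK S m t a b * Real.log (absK S m t a b) =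
      if a = m then 0 else (-t * Real.exp (-t)
                + (1 - Real.exp (-t)) * Real.log (1 - Real.exp (-t))) := by
    intro a
    rw [aux_row_sum S m t a (fun y => y * Real.log y) (by simp)]
    simp only [Real.log_one, mul_zero, Real.log_exp]
    split_ifs <;> ring
  generalize (-t * Real.exp (-t)
                + (1 - Real.exp (-t)) * Real.log (1 - Real.exp (-t))) = C at hent ⊢
  calc _ = ∑ x, fwd S d m q0 t x * Real.log (fwd S d m q0 t x) := by
        rw [Finset.sum_filter]
        apply Finset.sum_congr rfl
        intro x _
        split_ifs with h
        · rfl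
        · have : fwd S d m q0 t x = 0 := le_antisymm (not_lt.mp h) (hfn x)
          simp [this]
    _ ≤ ∑ x : Fin d → Fin S, ∑ x0, q0 x0 * ((∏ i, absK S m t (x0 i) (x i)) *
          Real.log (∏ i, absK S m t (x0 i) (x i))) := by
        apply Finset.sum_le_sum
        intro x _
        have := Real.convexOn_mul_log.map_sum_le (t := Finset.univ) (w := q0)
          (p := fun x0 => ∏ i, absK S m t (x0 i) (x i)) (fun i _ => hq0 i) hq0sum
          (fun x0 _ => Finset.prod_nonneg fun i _ => hK _ _)
        simpa only [smul_eq_mul, fwd] using this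
    _ = ∑ x0, q0 x0 * ∑ i, (if x0 i = m then 0 else C) := by
        rw [Finset.sum_comm]
        apply Finset.sum_congr rfl
        intro x0 _
        rw [← Finset.mul_sum, aux_prod_entropy S d (fun i => absK S m t (x0 i)) (fun i => hrow _)]
        simp_rw [hent]
    _ = _ := by
        simp_rw [Finset.mul_sum]
        rw [Finset.sum_comm, Finset.sum_mul]
        apply Finset.sum_congr rfl
        intro i _
        rw [← hq0sum, Finset.sum_filter, ← Finset.sum_sub_distrib, Finset.sum_mul]
        apply Finset.sum_congr rfl
        intro x0 _
        split_ifs <;> ring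
end

section
/- For every ε ∈ (0,1) and every t ≥ 0, the cross-entropy of the forward marginal against the surrogate product distribution equals exactly: ∑_{x ∈ X} q_t x · Real.log (p_init x) = ∑_{i : Fin d} [ (1 − q̄_i) · ( (1 − exp(−t)) · Real.log (1 − ε) + exp(−t) · Real.log (ε/(S − 1)) ) + q̄_i · Real.log (1 − ε) ], where q̄_i := ∑_{x0 ∈ X, x0 i = m} q0 x0 and p_init x = ∏_{i : Fin d} ((1 − ε) if x i = m, and ε/(S − 1) if x i ≠ m). -/
open Finset

theorem row_sum_aux (S : ℕ) (m : Fin S) (t u v : ℝ) (a : Fin S) :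
    ∑ b : Fin S, absK S m t a b * (if b = m then u else v)
      = if a = m then u else (1 - Real.exp (-t)) * u + Real.exp (-t) * v := by
  have h : ∀ b : Fin S, absK S m t a b * (if b = m then u else v)
      = (if a = b then (if a = m then u else Real.exp (-t) * v) else 0)
        + (if b = m then (if a = m then 0 else (1 - Real.exp (-t)) * u) else 0) := by
    intro b
    unfold absK
    by_cases h1 : a = b
    · subst h1
      by_cases h2 : a = m <;> simp [h2]
    · by_cases h2 : b = m
      · subst h2
        simp [h1]
      · simp [h1, h2]
  simp only [h, Finset.sum_add_distrib, Finset.sum_ite_eq, Finset.sum_ite_eq', Finset.mem_univ,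
    if_true]
  split_ifs <;> ring

theorem marg_aux (S d : ℕ) (m : Fin S) (t : ℝ) (x0 : Fin d → Fin S) (i : Fin d) (f : Fin S → ℝ) :
    ∑ x : Fin d → Fin S, (∏ j, absK S m t (x0 j) (x j)) * f (x i)
      = ∑ b, absK S m t (x0 i) b * f b := by
  have h1 : ∀ a, ∑ b, absK S m t a b = 1 := by
    intro a
    have := row_sum_aux S m t 1 1 a
    simpa using this
  have h2 : ∀ x : Fin d → Fin S, (∏ j, absK S m t (x0 j) (x j)) * f (x i)
      = ∏ j, (absK S m t (x0 j) (x j) * if j = i then f (x j) else 1) := by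
    intro x
    rw [Finset.prod_mul_distrib]
    simp
  simp only [h2]
  rw [← Fintype.prod_sum (fun j b => absK S m t (x0 j) b * if j = i then f b else 1)]
  rw [Finset.prod_eq_single i]
  · simp
  · intro j _ hj
    simp [hj, h1]
  · simp

/-- Exact expression for the cross-entropy of the forward marginal against the
surrogate product distribution. -/
theorem absorbing_cross_entropy_eq (S d : ℕ) (hS : 2 ≤ S) (hd : 1 ≤ d) (m : Fin S)
    (q0 : (Fin d → Fin S) → ℝ) (hq0 : ∀ x, 0 ≤ q0 x)
    (hq0sum : ∑ x : Fin d → Fin S, q0 x = 1) :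
    ∀ ε : ℝ, 0 < ε → ε < 1 → ∀ t : ℝ, 0 ≤ t →
      ∑ x : Fin d → Fin S, fwd S d m q0 t x * Real.log (pinit S d m ε x)
        = ∑ i : Fin d,
            ((1 - ∑ x0 ∈ Finset.univ.filter (fun x0 : Fin d → Fin S => x0 i = m), q0 x0)
                * ((1 - Real.exp (-t)) * Real.log (1 - ε)
                    + Real.exp (-t) * Real.log (ε / ((S : ℝ) - 1)))
              + (∑ x0 ∈ Finset.univ.filter (fun x0 : Fin d → Fin S => x0 i = m), q0 x0)
                  * Real.log (1 - ε)) := by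
  intro ε hε hε1 t ht
  have hS' : (0 : ℝ) < (S : ℝ) - 1 := by
    have : (2 : ℝ) ≤ S := by exact_mod_cast hS
    linarith
  have hlog : ∀ x : Fin d → Fin S, Real.log (pinit S d m ε x)
      = ∑ i, (if x i = m then Real.log (1 - ε) else Real.log (ε / ((S : ℝ) - 1))) := by
    intro x
    unfold pinit
    rw [Real.log_prod]
    · refine Finset.sum_congr rfl fun i _ => ?_
      split_ifs <;> rfl
    · intro i _
      split_ifs
      · linarith
      · positivity
  simp only [hlog, Finset.mul_sum]
  rw [Finset.sum_comm]
  refine Finset.sum_congr rfl fun i _ => ?_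
  generalize Real.log (1 - ε) = u
  generalize Real.log (ε / ((S : ℝ) - 1)) = v
  unfold fwd
  simp only [Finset.sum_mul, mul_assoc]
  rw [Finset.sum_comm]
  simp only [← Finset.mul_sum]
  have h3 : ∀ x0 : Fin d → Fin S, _ := fun x0 =>
    (marg_aux S d m t x0 i (fun b => if b = m then u else v)).trans (row_sum_aux S m t u v (x0 i))
  simp only [h3]
  rw [← hq0sum, ← Finset.sum_mul, Finset.sum_filter, ← Finset.sum_sub_distrib, Finset.sum_mul,
    Finset.sum_mul, ← Finset.sum_add_distrib]
  refine Finset.sum_congr rfl fun x0 _ => ?_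
  split_ifs <;> ring
end

section
/- Let t > 0, let x ∈ X with x j = m for some coordinate j : Fin d, let b : Fin S with b ≠ m, and set y := x[j ↦ b]. Then the absorbing score admits the exact representation q_t y · (1 − exp(−t)) = exp(−t) · ∑_{x0 ∈ X, x0 j = b} q0 x0 · ∏_{i : Fin d} P_t (x0 i) (x i). In particular, when q_t x > 0 this says q_t(y)/q_t(x) = (exp(−t)/(1 − exp(−t))) · Pr(x0 j = b | x_t = x), the conditional probability under the forward process that the j-th initial token equals b given the state x at time t. -/
open Finset

/-- Exact representation of the absorbing score: for `y = x[j ↦ b]` with `x j = m`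
and `b ≠ m`, `q_t y · (1 - e^{-t}) = e^{-t} · Pr(x0 j = b, x_t = x)`. -/
theorem absorbing_score_representation (S d : ℕ) (hS : 2 ≤ S) (hd : 1 ≤ d) (m : Fin S)
    (q0 : (Fin d → Fin S) → ℝ) (hq0 : ∀ x, 0 ≤ q0 x)
    (hq0sum : ∑ x : Fin d → Fin S, q0 x = 1)
    (t : ℝ) (ht : 0 < t) (x : Fin d → Fin S) (j : Fin d) (hxj : x j = m)
    (b : Fin S) (hb : b ≠ m) :
    fwd S d m q0 t (Function.update x j b) * (1 - Real.exp (-t))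
      = Real.exp (-t) *
          ∑ x0 ∈ Finset.univ.filter (fun x0 : Fin d → Fin S => x0 j = b),
            q0 x0 * ∏ i : Fin d, absK S m t (x0 i) (x i) := by
  rw [fwd, Finset.sum_filter, Finset.sum_mul, Finset.mul_sum]
  refine Finset.sum_congr rfl fun x0 _ => ?_
  rw [← Finset.mul_prod_erase Finset.univ (fun i => absK S m t (x0 i) (Function.update x j b i))
      (Finset.mem_univ j),
    ← Finset.mul_prod_erase Finset.univ (fun i => absK S m t (x0 i) (x i)) (Finset.mem_univ j)]
  have h : ∏ i ∈ Finset.univ.erase j, absK S m t (x0 i) (Function.update x j b i)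
      = ∏ i ∈ Finset.univ.erase j, absK S m t (x0 i) (x i) := by
    refine Finset.prod_congr rfl fun i hi => ?_
    rw [Function.update_of_ne (Finset.ne_of_mem_erase hi)]
  rw [h]
  simp only [Function.update_self, hxj]
  by_cases hx : x0 j = b
  · simp only [absK, hx, hb, if_true, if_false]
    ring
  · simp [absK, hx, hb]
end

section
/- Let t > 0 and let (x, y) be an admissible reverse transition (x and y differ in exactly one coordinate j, with x j = m and y j ≠ m). Then the score is bounded above: q_t y · (Real.exp t − 1) ≤ q_t x, and consequently t · q_t y ≤ q_t x. In particular, if q_t x > 0 then q_t(y)/q_t(x) ≤ 1/(e^t − 1) ≤ 1/t. -/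
open Finset

/-- Score upper bound for admissible reverse transitions under the absorbing rate:
`q_t(y)/q_t(x) ≤ 1/(e^t - 1) ≤ 1/t`. -/
theorem absorbing_score_upper_bound (S d : ℕ) (hS : 2 ≤ S) (hd : 1 ≤ d) (m : Fin S)
    (q0 : (Fin d → Fin S) → ℝ) (hq0 : ∀ x, 0 ≤ q0 x)
    (hq0sum : ∑ x : Fin d → Fin S, q0 x = 1)
    (t : ℝ) (ht : 0 < t) (x y : Fin d → Fin S) (j : Fin d)
    (hxj : x j = m) (hyj : y j ≠ m) (hoff : ∀ i : Fin d, i ≠ j → x i = y i) :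
    fwd S d m q0 t y * (Real.exp t - 1) ≤ fwd S d m q0 t x ∧
      t * fwd S d m q0 t y ≤ fwd S d m q0 t x := by
  have he1 : Real.exp (-t) ≤ 1 := Real.exp_le_one_iff.mpr (by linarith)
  have hep : 0 < Real.exp (-t) := Real.exp_pos _
  have hmul : Real.exp (-t) * Real.exp t = 1 := by
    rw [← Real.exp_add]; simp
  have hK : ∀ a b, 0 ≤ absK S m t a b := by
    intro a b
    unfold absK
    split_ifs <;> linarith
  have hF : 0 ≤ fwd S d m q0 t y :=
    Finset.sum_nonneg fun x0 _ => mul_nonneg (hq0 x0) (Finset.prod_nonneg fun i _ => hK _ _)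
  have hj : ∀ a, absK S m t a (y j) * (Real.exp t - 1) ≤ absK S m t a (x j) := by
    intro a
    rw [hxj]
    by_cases h : a = y j
    · subst h
      simp only [absK, if_true, if_neg hyj]
      linarith
    · have h0 : absK S m t a (y j) = 0 := by simp [absK, h, hyj]
      rw [h0, zero_mul]
      exact hK _ _
  have main : fwd S d m q0 t y * (Real.exp t - 1) ≤ fwd S d m q0 t x := by
    unfold fwd
    rw [Finset.sum_mul]
    refine Finset.sum_le_sum fun x0 _ => ?_
    rw [mul_assoc]
    refine mul_le_mul_of_nonneg_left ?_ (hq0 x0)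
    rw [← Finset.mul_prod_erase univ _ (Finset.mem_univ j),
      ← Finset.mul_prod_erase univ (fun i => absK S m t (x0 i) (x i)) (Finset.mem_univ j)]
    have hE : ∏ i ∈ univ.erase j, absK S m t (x0 i) (x i)
        = ∏ i ∈ univ.erase j, absK S m t (x0 i) (y i) :=
      Finset.prod_congr rfl fun i hi => by rw [hoff i (Finset.ne_of_mem_erase hi)]
    rw [hE, mul_right_comm]
    exact mul_le_mul_of_nonneg_right (hj _) (Finset.prod_nonneg fun i _ => hK _ _)
  refine ⟨main, le_trans ?_ main⟩
  rw [mul_comm]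
  exact mul_le_mul_of_nonneg_left (by linarith [Real.add_one_le_exp t]) hF
end

section
/- Suppose the data distribution contains no mask tokens: q0 x0 = 0 whenever there exists i : Fin d with x0 i = m. Then there exists a constant c > 0 (depending on S, d, and q0, but not on t, x, or y) such that for every t > 0 and every admissible reverse transition (x, y) (x and y differ in exactly one coordinate j with x j = m and y j ≠ m) with q_t y > 0, the improved score lower bound holds: q_t y · (Real.exp t − 1) ≥ c · q_t x. In particular, as t → 0 the score q_t(y)/q_t(x) diverges at the same rate 1/(e^t − 1) as the matching upper bound. -/
open Finset

noncomputable def absW (S : ℕ) (m : Fin S) (t : ℝ) (b : Fin S) : ℝ :=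
  if b = m then 1 - Real.exp (-t) else Real.exp (-t)

lemma absW_nonneg (S : ℕ) (m : Fin S) (t : ℝ) (ht : 0 < t) (b : Fin S) : 0 ≤ absW S m t b := by
  have h1 : Real.exp (-t) ≤ 1 := Real.exp_le_one_iff.mpr (by linarith)
  have h2 := Real.exp_pos (-t)
  unfold absW
  split_ifs <;> linarith

lemma absK_cases (S : ℕ) (m : Fin S) (t : ℝ) (a b : Fin S) (ha : a ≠ m) :
    absK S m t a b = absW S m t b ∨ absK S m t a b = 0 := by
  unfold absK absW
  by_cases hab : a = b
  · subst hab; simp [ha]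
  · by_cases hb : b = m <;> simp [hab, hb]
    subst hb; simp [ha]

lemma absK_nonneg (S : ℕ) (m : Fin S) (t : ℝ) (ht : 0 < t) (a b : Fin S) :
    0 ≤ absK S m t a b := by
  have h1 : Real.exp (-t) ≤ 1 := Real.exp_le_one_iff.mpr (by linarith)
  have h2 := Real.exp_pos (-t)
  unfold absK
  split_ifs <;> linarith

/-- Improved score lower bound when the data distribution contains no mask tokens:
`q_t(y)/q_t(x) ≳ 1/(e^t - 1)`, matching the rate of the upper bound as `t → 0`. -/
theorem absorbing_score_lower_bound_no_mask (S d : ℕ) (hS : 2 ≤ S) (hd : 1 ≤ d) (m : Fin S)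
    (q0 : (Fin d → Fin S) → ℝ) (hq0 : ∀ x, 0 ≤ q0 x)
    (hq0sum : ∑ x : Fin d → Fin S, q0 x = 1)
    (hq0mask : ∀ x0 : Fin d → Fin S, (∃ i : Fin d, x0 i = m) → q0 x0 = 0) :
    ∃ c : ℝ, 0 < c ∧
      ∀ t : ℝ, 0 < t →
        ∀ (x y : Fin d → Fin S) (j : Fin d),
          x j = m → y j ≠ m → (∀ i : Fin d, i ≠ j → x i = y i) →
          0 < fwd S d m q0 t y →
          c * fwd S d m q0 t x ≤ fwd S d m q0 t y * (Real.exp t - 1) := by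
  haveI : Nonempty (Fin d → Fin S) := ⟨fun _ => m⟩
  obtain ⟨z, hz⟩ := Finite.exists_min (fun x => if 0 < q0 x then q0 x else 1)
  refine ⟨if 0 < q0 z then q0 z else 1, by split_ifs with h <;> [exact h; norm_num], ?_⟩
  generalize (if 0 < q0 z then q0 z else 1) = c at hz
  have hc : ∀ x, 0 < q0 x → c ≤ q0 x := by
    intro x hx
    have := hz x
    simpa [hx] using this
  by_cases hc0 : c ≤ 0
  · intro t ht x y j _ _ _ hy
    have hx : 0 ≤ fwd S d m q0 t x := Finset.sum_nonneg fun x0 _ =>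
      mul_nonneg (hq0 x0) (Finset.prod_nonneg fun i _ => absK_nonneg S m t ht _ _)
    have h1 : 1 ≤ Real.exp t := Real.one_le_exp ht.le
    have h2 : c * fwd S d m q0 t x ≤ 0 := mul_nonpos_of_nonpos_of_nonneg hc0 hx
    have h3 : 0 ≤ fwd S d m q0 t y * (Real.exp t - 1) := mul_nonneg hy.le (by linarith)
    linarith
  push Not at hc0
  intro t ht x y j hxj hyj hxy hy
  have h1 : 1 ≤ Real.exp t := Real.one_le_exp ht.le
  have hW : ∀ b, 0 ≤ absW S m t b := absW_nonneg S m t ht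
  have hxle : fwd S d m q0 t x ≤ ∏ i, absW S m t (x i) := by
    calc fwd S d m q0 t x ≤ ∑ x0, q0 x0 * ∏ i, absW S m t (x i) := by
          apply Finset.sum_le_sum
          intro x0 _
          by_cases hm : ∃ i, x0 i = m
          · simp [hq0mask x0 hm]
          · push Not at hm
            apply mul_le_mul_of_nonneg_left _ (hq0 x0)
            apply Finset.prod_le_prod
            · intro i _; exact absK_nonneg S m t ht _ _
            · intro i _
              rcases absK_cases S m t (x0 i) (x i) (hm i) with h | h <;> rw [h]
              exact hW _
      _ = ∏ i, absW S m t (x i) := by rw [← Finset.sum_mul, hq0sum, one_mul]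
  have hyge : c * ∏ i, absW S m t (y i) ≤ fwd S d m q0 t y := by
    have hnn : ∀ x0 ∈ (Finset.univ : Finset (Fin d → Fin S)),
        0 ≤ q0 x0 * ∏ i, absK S m t (x0 i) (y i) := fun x0 _ =>
      mul_nonneg (hq0 x0) (Finset.prod_nonneg fun i _ => absK_nonneg S m t ht _ _)
    obtain ⟨x0, -, hx0⟩ := Finset.exists_ne_zero_of_sum_ne_zero (ne_of_gt hy)
    have hq : q0 x0 ≠ 0 := left_ne_zero_of_mul hx0
    have hp := right_ne_zero_of_mul hx0
    have hm : ∀ i, x0 i ≠ m := fun i hi => hq (hq0mask x0 ⟨i, hi⟩)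
    have heq : ∏ i, absK S m t (x0 i) (y i) = ∏ i, absW S m t (y i) := by
      apply Finset.prod_congr rfl
      intro i hi
      rcases absK_cases S m t (x0 i) (y i) (hm i) with h | h
      · exact h
      · exact absurd (Finset.prod_eq_zero hi h) hp
    calc c * ∏ i, absW S m t (y i) ≤ q0 x0 * ∏ i, absW S m t (y i) :=
          mul_le_mul_of_nonneg_right (hc x0 (lt_of_le_of_ne (hq0 x0) hq.symm))
            (Finset.prod_nonneg fun i _ => hW _)
      _ = q0 x0 * ∏ i, absK S m t (x0 i) (y i) := by rw [heq]
      _ ≤ fwd S d m q0 t y := Finset.single_le_sum hnn (Finset.mem_univ x0)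
  have hxyW : (∏ i, absW S m t (y i)) * (Real.exp t - 1) = ∏ i, absW S m t (x i) := by
    rw [← Finset.mul_prod_erase _ _ (Finset.mem_univ j),
      ← Finset.mul_prod_erase _ (fun i => absW S m t (x i)) (Finset.mem_univ j)]
    have : ∏ i ∈ Finset.univ.erase j, absW S m t (x i)
        = ∏ i ∈ Finset.univ.erase j, absW S m t (y i) :=
      Finset.prod_congr rfl fun i hi => by rw [hxy i (Finset.ne_of_mem_erase hi)]
    rw [this]
    have hj : absW S m t (y j) * (Real.exp t - 1) = absW S m t (x j) := by
      simp only [absW, hxj, hyj, if_true, if_false]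
      rw [mul_sub, ← Real.exp_add]; simp
    rw [← hj]; ring
  calc c * fwd S d m q0 t x ≤ c * ∏ i, absW S m t (x i) :=
        mul_le_mul_of_nonneg_left hxle hc0.le
    _ = (c * ∏ i, absW S m t (y i)) * (Real.exp t - 1) := by rw [← hxyW]; ring
    _ ≤ _ := mul_le_mul_of_nonneg_right hyge (by linarith)
end

section
/- Suppose there is γ > 0 such that for every coordinate i : Fin d, every u ∈ X, and every token a : Fin S with a ≠ m, one has γ · q0 (u[i ↦ a]) ≤ q0 (u[i ↦ m]) (i.e., in the data distribution the mask token has conditional likelihood at least γ times that of any other token, in every coordinate and context). Then for every t > 0 and every admissible reverse transition (x, y) (x and y differ in exactly one coordinate j with x j = m and y j ≠ m), the score satisfies the non-diverging upper bound q_t y ≤ min (1/t) (1/γ) · q_t x; in particular γ · q_t y ≤ q_t x, a bound uniform in t. -/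
open Finset

/-- Non-diverging score upper bound: if in the data distribution the mask token has
conditional likelihood at least `γ` times that of any other token (in every coordinate
and context), then `q_t(y) ≤ min (1/t) (1/γ) · q_t(x)`, and in particular
`γ · q_t(y) ≤ q_t(x)`, uniformly in `t`. -/
theorem absorbing_score_upper_bound_no_early_stopping (S d : ℕ) (hS : 2 ≤ S) (hd : 1 ≤ d)
    (m : Fin S) (q0 : (Fin d → Fin S) → ℝ) (hq0 : ∀ x, 0 ≤ q0 x)
    (hq0sum : ∑ x : Fin d → Fin S, q0 x = 1)
    (γ : ℝ) (hγ : 0 < γ)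
    (hmask : ∀ (i : Fin d) (u : Fin d → Fin S) (a : Fin S), a ≠ m →
      γ * q0 (Function.update u i a) ≤ q0 (Function.update u i m)) :
    ∀ t : ℝ, 0 < t →
      ∀ (x y : Fin d → Fin S) (j : Fin d),
        x j = m → y j ≠ m → (∀ i : Fin d, i ≠ j → x i = y i) →
        fwd S d m q0 t y ≤ min (1 / t) (1 / γ) * fwd S d m q0 t x ∧
          γ * fwd S d m q0 t y ≤ fwd S d m q0 t x := by
  intro t ht x y j hxj hyj hxy
  have hE0 : 0 < Real.exp (-t) := Real.exp_pos _
  have hE1 : Real.exp (-t) ≤ 1 := Real.exp_le_one_iff.mpr (by linarith)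
  have hEt : t * Real.exp (-t) ≤ 1 - Real.exp (-t) := by
    have h1 : t + 1 ≤ Real.exp t := Real.add_one_le_exp t
    have h2 : Real.exp t * Real.exp (-t) = 1 := by rw [← Real.exp_add]; simp
    nlinarith
  have hK : ∀ a b, 0 ≤ absK S m t a b := by
    intro a b
    unfold absK
    split_ifs <;> linarith
  let R : (Fin d → Fin S) → ℝ := fun z => ∏ i ∈ univ.erase j, absK S m t (z i) (y i)
  have hR : ∀ z, 0 ≤ R z := fun z => Finset.prod_nonneg (fun i _ => hK _ _)
  have hfy : fwd S d m q0 t y = ∑ z, q0 z * (absK S m t (z j) (y j) * R z) := by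
    unfold fwd
    refine Finset.sum_congr rfl (fun z _ => ?_)
    rw [← Finset.mul_prod_erase univ _ (Finset.mem_univ j)]
  have hfx : fwd S d m q0 t x = ∑ z, q0 z * (absK S m t (z j) m * R z) := by
    unfold fwd
    refine Finset.sum_congr rfl (fun z _ => ?_)
    rw [← Finset.mul_prod_erase univ _ (Finset.mem_univ j), hxj]
    congr 2
    refine Finset.prod_congr rfl (fun i hi => ?_)
    rw [hxy i (Finset.ne_of_mem_erase hi)]
  have hT : t * fwd S d m q0 t y ≤ fwd S d m q0 t x := by
    rw [hfy, hfx, Finset.mul_sum]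
    refine Finset.sum_le_sum (fun z _ => ?_)
    have h : t * absK S m t (z j) (y j) ≤ absK S m t (z j) m := by
      by_cases hz : z j = y j
      · simp only [absK, hz, hyj, if_true, if_false]; exact hEt
      · have : absK S m t (z j) (y j) = 0 := by simp [absK, hz, hyj]
        rw [this, mul_zero]; exact hK _ _
    have := mul_le_mul_of_nonneg_left h (mul_nonneg (hq0 z) (hR z))
    linarith
  have hG : γ * fwd S d m q0 t y ≤ fwd S d m q0 t x := by
    let g : (Fin d → Fin S) → ℝ := fun z => q0 z * (absK S m t (z j) m * R z)
    have hg : ∀ z, 0 ≤ g z := fun z => mul_nonneg (hq0 z) (mul_nonneg (hK _ _) (hR z))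
    let F : Finset (Fin d → Fin S) := univ.filter (fun z => z j = y j)
    let φ : (Fin d → Fin S) → (Fin d → Fin S) := fun z => Function.update z j m
    have hinj : Set.InjOn φ (F : Set (Fin d → Fin S)) := by
      intro a ha b hb hab
      have ha' : a j = y j := by simpa [F] using ha
      have hb' : b j = y j := by simpa [F] using hb
      funext i
      by_cases hi : i = j
      · rw [hi, ha', hb']
      · have := congrFun hab i
        simpa [φ, hi] using this
    have h1 : fwd S d m q0 t y = ∑ z ∈ F, q0 z * (absK S m t (z j) (y j) * R z) := by
      rw [hfy]
      symm
      refine Finset.sum_subset (Finset.subset_univ _) (fun z _ hz => ?_)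
      have hz' : z j ≠ y j := by simpa [F] using hz
      simp [absK, hz', hyj]
    have h2 : ∑ z ∈ F, γ * (q0 z * (absK S m t (z j) (y j) * R z)) ≤ ∑ z ∈ F, g (φ z) := by
      refine Finset.sum_le_sum (fun z hz => ?_)
      have hz' : z j = y j := by simpa [F] using hz
      have hRφ : R (φ z) = R z := by
        refine Finset.prod_congr rfl (fun i hi => ?_)
        simp [φ, Finset.ne_of_mem_erase hi]
      have e1 : g (φ z) = q0 (φ z) * R z := by
        simp only [g, hRφ]
        simp [φ, absK]
      have e2 : absK S m t (z j) (y j) = Real.exp (-t) := by simp [absK, hz', hyj]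
      have h3 : γ * q0 z ≤ q0 (φ z) := by
        have := hmask j z (z j) (by rw [hz']; exact hyj)
        rwa [Function.update_eq_self] at this
      rw [e1, e2]
      have h4 := mul_le_mul_of_nonneg_right h3 (hR z)
      have h5 : 0 ≤ γ * q0 z * R z := mul_nonneg (mul_nonneg hγ.le (hq0 z)) (hR z)
      nlinarith
    rw [h1, hfx, Finset.mul_sum]
    calc _ ≤ ∑ z ∈ F, g (φ z) := h2
      _ = ∑ z ∈ F.image φ, g z := (Finset.sum_image hinj).symm
      _ ≤ ∑ z, g z := Finset.sum_le_sum_of_subset_of_nonneg (Finset.subset_univ _)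
          (fun z _ _ => hg z)
  refine ⟨?_, hG⟩
  rcases min_choice (1 / t) (1 / γ) with h | h <;> rw [h, one_div, ← div_eq_inv_mul]
  · rw [le_div_iff₀ ht]; linarith
  · rw [le_div_iff₀ hγ]; linarith
end

section
/- For every t > 0 and every y ∈ X: q_t y > 0 if and only if there exists x0 ∈ X with q0 x0 > 0 such that for every coordinate i : Fin d either y i = x0 i or y i = m. Consequently, the support of the forward marginal is constant in time: for all s, t > 0 and all y ∈ X, q_s y > 0 if and only if q_t y > 0. -/
open Finset

/-- Support characterization of the forward marginal: `q_t(y) > 0` iff `y` is obtained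
from some `x0` in the support of `q0` by masking some coordinates. Consequently, the
support of the forward marginal is constant in time. -/
theorem absorbing_support_characterization (S d : ℕ) (hS : 2 ≤ S) (hd : 1 ≤ d) (m : Fin S)
    (q0 : (Fin d → Fin S) → ℝ) (hq0 : ∀ x, 0 ≤ q0 x)
    (hq0sum : ∑ x : Fin d → Fin S, q0 x = 1) :
    (∀ t : ℝ, 0 < t → ∀ y : Fin d → Fin S,
      (0 < fwd S d m q0 t y ↔
        ∃ x0 : Fin d → Fin S, 0 < q0 x0 ∧ ∀ i : Fin d, y i = x0 i ∨ y i = m)) ∧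
    ∀ s t : ℝ, 0 < s → 0 < t → ∀ y : Fin d → Fin S,
      (0 < fwd S d m q0 s y ↔ 0 < fwd S d m q0 t y) := by
  have key : ∀ t : ℝ, 0 < t → ∀ y : Fin d → Fin S,
      (0 < fwd S d m q0 t y ↔
        ∃ x0 : Fin d → Fin S, 0 < q0 x0 ∧ ∀ i : Fin d, y i = x0 i ∨ y i = m) := by
    intro t ht y
    have h1 : Real.exp (-t) < 1 := by
      rw [Real.exp_lt_one_iff]; linarith
    have h0 : 0 < Real.exp (-t) := Real.exp_pos _
    have knn : ∀ a b : Fin S, 0 ≤ absK S m t a b := by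
      intro a b
      unfold absK
      split_ifs <;> linarith
    have kpos : ∀ a b : Fin S, (b = a ∨ b = m) → 0 < absK S m t a b := by
      intro a b h
      unfold absK
      split_ifs with h2 h3 h4
      · linarith
      · linarith
      · linarith
      · rcases h with h | h
        · exact absurd h.symm h2
        · exact absurd h h4
    have kzero : ∀ a b : Fin S, ¬ (b = a ∨ b = m) → absK S m t a b = 0 := by
      intro a b h
      have ha : ¬ a = b := fun e => h (Or.inl e.symm)
      have hb : ¬ b = m := fun e => h (Or.inr e)
      simp [absK, ha, hb]
    have tnn : ∀ x0 ∈ (Finset.univ : Finset (Fin d → Fin S)),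
        0 ≤ q0 x0 * ∏ i : Fin d, absK S m t (x0 i) (y i) := fun x0 _ =>
      mul_nonneg (hq0 x0) (Finset.prod_nonneg fun i _ => knn _ _)
    unfold fwd
    rw [Finset.sum_pos_iff_of_nonneg tnn]
    constructor
    · rintro ⟨x0, _, hx⟩
      refine ⟨x0, ?_, ?_⟩
      · refine lt_of_le_of_ne (hq0 x0) fun e => ?_
        rw [← e, zero_mul] at hx
        exact lt_irrefl _ hx
      · intro i
        by_contra hi
        rw [Finset.prod_eq_zero (Finset.mem_univ i) (kzero _ _ hi), mul_zero] at hx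
        exact lt_irrefl _ hx
    · rintro ⟨x0, hx, hi⟩
      exact ⟨x0, Finset.mem_univ _, mul_pos hx (Finset.prod_pos fun i _ => kpos _ _ (hi i))⟩
  exact ⟨key, fun s t hs ht y => (key s hs y).trans (key t ht y).symm⟩
end
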